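/- Let q ∈ [2,3], let H₁,…,H_k be m×n complex matrices with H₁*H₁ + ⋯ + H_k*H_k ≤ I_n, and let L be an n×n positive semidefinite matrix. Then the function φ(A₁,…,A_k) = Tr exp_q(L + H₁* log_q(A₁) H₁ + ⋯ + H_k* log_q(A_k) H_k) is jointly convex in tuples (A₁,…,A_k) of m×m positive definite matrices. -/

import Mathlib

open Matrix ComplexOrder

/-- Matrix logarithm of a (positive definite) Hermitian matrix, via functional calculus. -/
noncomputable def mlog {n : ℕ} (A : Matrix (Fin n) (Fin n) ℂ) : Matrix (Fin n) (Fin n) ℂ :=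
  cfc Real.log A

/-- Matrix exponential of a Hermitian matrix, via functional calculus. -/
noncomputable def mexp {n : ℕ} (A : Matrix (Fin n) (Fin n) ℂ) : Matrix (Fin n) (Fin n) ℂ :=
  cfc Real.exp A

/-- Real power of a (positive definite) Hermitian matrix, via functional calculus. -/
noncomputable def mpow {n : ℕ} (A : Matrix (Fin n) (Fin n) ℂ) (p : ℝ) : Matrix (Fin n) (Fin n) ℂ :=
  cfc (fun x : ℝ => x ^ p) A

/-- Deformed logarithm `log_q x = (x^(q-1) - 1)/(q-1)`. -/
noncomputable def logq (q x : ℝ) : ℝ := (x ^ (q - 1) - 1) / (q - 1)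

/-- Deformed exponential `exp_q x = (1 + (q-1)x)^(1/(q-1))`, with `exp_1 = exp`. -/
noncomputable def expq (q x : ℝ) : ℝ :=
  if q = 1 then Real.exp x else (1 + (q - 1) * x) ^ (1 / (q - 1))

/-- Deformed logarithm of a positive definite matrix, via functional calculus. -/
noncomputable def mlogq {n : ℕ} (q : ℝ) (A : Matrix (Fin n) (Fin n) ℂ) :
    Matrix (Fin n) (Fin n) ℂ :=
  cfc (logq q) A

/-- Deformed exponential of a Hermitian matrix, via functional calculus. -/
noncomputable def mexpq {m : ℕ} (q : ℝ) (A : Matrix (Fin m) (Fin m) ℂ) :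
    Matrix (Fin m) (Fin m) ℂ :=
  cfc (expq q) A

/-- Real part of the trace. -/
noncomputable def trRe {n : ℕ} (M : Matrix (Fin n) (Fin n) ℂ) : ℝ := (Matrix.trace M).re

/-- The reduced relative entropy `S_H(A | B) = Tr[A log A - H* A H log B - A + B]`. -/
noncomputable def SH {n : ℕ} (H A B : Matrix (Fin n) (Fin n) ℂ) : ℝ :=
  trRe (A * mlog A - Hᴴ * A * H * mlog B - A + B)

/-- The reduced Tsallis relative entropy
`S_{H,q}(A | B) = Tr[A^(2-q) log_q A - H* A^(2-q) H log_q B - A + B]`. -/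
noncomputable def STq {n : ℕ} (H : Matrix (Fin n) (Fin n) ℂ) (q : ℝ)
    (A B : Matrix (Fin n) (Fin n) ℂ) : ℝ :=
  trRe (mpow A (2 - q) * mlogq q A - Hᴴ * mpow A (2 - q) * H * mlogq q B - A + B)


/-- The multivariate trace functional φ(A₁,…,A_k) = Tr exp_q(L + Σⱼ Hⱼ* log_q(Aⱼ) Hⱼ). -/
noncomputable def phim {m n k : ℕ} (q : ℝ) (H : Fin k → Matrix (Fin m) (Fin n) ℂ)
    (L : Matrix (Fin n) (Fin n) ℂ) (A : Fin k → Matrix (Fin m) (Fin m) ℂ) : ℝ :=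
  trRe (mexpq q (L + ∑ j, (H j)ᴴ * mlogq q (A j) * H j))

/-! With `p = q - 1 ∈ [1, 2]`, the functional is `Tr X^{1/p}` where `X = C + ∑ j, Hⱼ* Aⱼ^p Hⱼ` and
`C = I - ∑ j, Hⱼ* Hⱼ + p L ≥ 0`. Young's inequality for the commuting left and right multiplication
operators gives `Tr X^{1/p} = inf_{Z > 0} (p⁻¹ Tr X Z^{1-p} + (1 - p⁻¹) Tr Z)`. The expression under
the infimum is jointly convex in `(A, Z)` by Ando's theorem, and partial minimisation preserves
convexity.

Ando's theorem, the joint convexity of `Tr K* A^p K Z^{1-p}`, is reduced by the integral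
representation `x^p y^{1-p} = ∫ x² / (x + r y) dμ(r)` to the quadratic form of `x² / (α x + β y)`
at `(L_A, R_Z)`. Completing the square exhibits that form as a supremum over `W` of functions that
are affine in `(A, Z)`.
-/

section Convexity

variable {E F : Type*} [AddCommGroup E] [Module ℝ E] [AddCommGroup F] [Module ℝ F] {s : Set E}

theorem convexOn_of_isLUB {ι : Type*} {l : ι → E → ℝ} {f : E → ℝ} (hs : Convex ℝ s)
    (hl : ∀ i, ConvexOn ℝ s (l i)) (hf : ∀ x ∈ s, IsLUB (Set.range fun i => l i x) (f x)) :
    ConvexOn ℝ s f := by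
  refine ⟨hs, fun x hx y hy a b ha hb hab => (hf _ (hs hx hy ha hb hab)).2 ?_⟩
  rintro _ ⟨i, rfl⟩
  have hlf : ∀ z ∈ s, l i z ≤ f z := fun z hz => (hf z hz).1 ⟨i, rfl⟩
  calc l i (a • x + b • y) ≤ a • l i x + b • l i y := (hl i).2 hx hy ha hb hab
    _ ≤ a • f x + b • f y := by gcongr <;> exact hlf _ ‹_›

theorem convexOn_of_isGLB_image {t : Set F} {g : E × F → ℝ} {f : E → ℝ} (hs : Convex ℝ s)
    (hg : ConvexOn ℝ (s ×ˢ t) g) (hf : ∀ x ∈ s, IsGLB ((fun y => g (x, y)) '' t) (f x)) :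
    ConvexOn ℝ s f := by
  refine ⟨hs, fun x hx y hy a b ha hb hab => le_of_forall_pos_le_add fun ε hε => ?_⟩
  have near : ∀ z ∈ s, ∃ w ∈ t, g (z, w) < f z + ε := fun z hz => by
    obtain ⟨_, ⟨w, hw, rfl⟩, -, hlt⟩ := (hf z hz).exists_between (lt_add_of_pos_right (f z) hε)
    exact ⟨w, hw, hlt⟩
  obtain ⟨u, hu, hxu⟩ := near x hx
  obtain ⟨v, hv, hyv⟩ := near y hy
  have hmem := hg.1 (Set.mk_mem_prod hx hu) (Set.mk_mem_prod hy hv) ha hb hab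
  calc f (a • x + b • y) ≤ g (a • (x, u) + b • (y, v)) :=
        (hf _ hmem.1).1 ⟨_, hmem.2, rfl⟩
    _ ≤ a • g (x, u) + b • g (y, v) :=
        hg.2 (Set.mk_mem_prod hx hu) (Set.mk_mem_prod hy hv) ha hb hab
    _ ≤ a • (f x + ε) + b • (f y + ε) := by gcongr
    _ = a • f x + b • f y + ε := by
      simp only [smul_eq_mul]
      linear_combination ε * hab

theorem convexOn_finset_sum {ι : Type*} (hs : Convex ℝ s) (t : Finset ι) {f : ι → E → ℝ}
    (hf : ∀ i ∈ t, ConvexOn ℝ s (f i)) : ConvexOn ℝ s fun x => ∑ i ∈ t, f i x := by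
  refine ⟨hs, fun x hx y hy a b ha hb hab => ?_⟩
  rw [Finset.smul_sum, Finset.smul_sum, ← Finset.sum_add_distrib]
  exact Finset.sum_le_sum fun i hi => (hf i hi).2 hx hy ha hb hab

end Convexity

open MeasureTheory in
theorem exists_measure_rpow_mul_rpow_eq_integral {p : ℝ} (hp : p ∈ Set.Ioo 1 2) :
    ∃ μ : Measure ℝ, (∀ᵐ r ∂μ, 0 < r) ∧ ∀ x y : ℝ, 0 ≤ x → 0 < y →
      Integrable (fun r => x ^ 2 / (x + r * y)) μ ∧
        x ^ p * y ^ (1 - p) = ∫ r, x ^ 2 / (x + r * y) ∂μ := by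
  obtain ⟨μ, hμ⟩ := Real.exists_measure_rpow_eq_integral_rpowIntegrand₁₂ hp
  have hw : Measurable fun r : ℝ => (r ^ (p - 2)).toNNReal := by fun_prop
  refine ⟨(μ.restrict (Set.Ioi 0)).withDensity fun r => ((r ^ (p - 2)).toNNReal : ENNReal),
    (withDensity_absolutelyContinuous _ _).ae_le (ae_restrict_mem measurableSet_Ioi),
    fun x y hx hy => ?_⟩
  obtain ⟨hint, heq⟩ := hμ (x / y) (div_nonneg hx hy.le)
  have kernel : Set.EqOn (fun r => y * Real.rpowIntegrand₁₂ p r (x / y))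
      (fun r => (r ^ (p - 2)).toNNReal • (x ^ 2 / (x + r * y))) (Set.Ioi 0) := by
    intro r (hr : 0 < r)
    have : x + r * y ≠ 0 := by positivity
    have hrp : r ^ (p - 1) = r ^ (p - 2) * r := by
      rw [← Real.rpow_add_one hr.ne']
      ring_nf
    simp only [NNReal.smul_def, Real.coe_toNNReal _ (Real.rpow_nonneg hr.le _), smul_eq_mul,
      Real.rpowIntegrand₁₂, hrp]
    field_simp
    ring
  rw [integrable_withDensity_iff_integrable_smul hw, integral_withDensity_eq_integral_smul hw]
  refine ⟨IntegrableOn.congr_fun (hint.const_mul y) kernel measurableSet_Ioi, ?_⟩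
  rw [← setIntegral_congr_fun measurableSet_Ioi kernel, integral_const_mul, ← heq,
    Real.div_rpow hx hy.le, Real.rpow_sub hy, Real.rpow_one]
  ring

theorem rpow_inv_le_mul_rpow_add {p x z : ℝ} (hp : 1 ≤ p) (hx : 0 ≤ x) (hz : 0 < z) :
    x ^ p⁻¹ ≤ p⁻¹ * (x * z ^ (1 - p)) + (1 - p⁻¹) * z := by
  have : 0 < p := one_pos.trans_le hp
  calc x ^ p⁻¹ = (x * z ^ (1 - p)) ^ p⁻¹ * z ^ (1 - p⁻¹) := by
        have hexp : (1 - p) * p⁻¹ + (1 - p⁻¹) = 0 := by field_simp; ring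
        rw [Real.mul_rpow hx (by positivity), ← Real.rpow_mul hz.le, mul_assoc, ← Real.rpow_add hz,
          hexp, Real.rpow_zero, mul_one]
    _ ≤ p⁻¹ * (x * z ^ (1 - p)) + (1 - p⁻¹) * z :=
        Real.geom_mean_le_arith_mean2_weighted (by positivity)
          (sub_nonneg.2 (inv_le_one_of_one_le₀ hp)) (by positivity) hz.le (by ring)

theorem mul_rpow_one_sub_le {p x z : ℝ} (hp : 1 ≤ p) (hx : 0 ≤ x) (hz : 0 < z)
    (hxz : x ^ p⁻¹ ≤ z) : x * z ^ (1 - p) ≤ z := by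
  have hxzp : x ≤ z ^ p := (Real.rpow_inv_le_iff_of_pos hx hz.le (one_pos.trans_le hp)).1 hxz
  calc x * z ^ (1 - p) ≤ z ^ p * z ^ (1 - p) := by gcongr
    _ = z := by rw [← Real.rpow_add hz, add_sub_cancel, Real.rpow_one]

section JointCfc

variable {𝕜 m n : Type*} [RCLike 𝕜] [Fintype m] [DecidableEq m] [Fintype n] [DecidableEq n]
  {A : Matrix m m 𝕜} {Z : Matrix n n 𝕜}

theorem continuousOn_real_spectrum (f : ℝ → ℝ) (A : Matrix n n 𝕜) :
    ContinuousOn f (spectrum ℝ A) :=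
  A.finite_real_spectrum.continuousOn f

/-- The orthogonal projection onto the eigenspace of a Hermitian matrix `A` for `x`, as the
functional calculus of an indicator; it vanishes unless `x` is an eigenvalue. -/
noncomputable def spectralProjection (A : Matrix n n 𝕜) (x : ℝ) : Matrix n n 𝕜 :=
  cfc (Pi.single x 1 : ℝ → ℝ) A

theorem isHermitian_spectralProjection (A : Matrix n n 𝕜) (x : ℝ) :
    (spectralProjection A x).IsHermitian :=
  cfc_predicate (Pi.single x 1 : ℝ → ℝ) A

theorem spectralProjection_mul_spectralProjection (A : Matrix n n 𝕜) (x y : ℝ) :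
    spectralProjection A x * spectralProjection A y =
      if x = y then spectralProjection A x else 0 := by
  rw [spectralProjection, spectralProjection, ← cfc_mul _ _ _ (continuousOn_real_spectrum _ _)
    (continuousOn_real_spectrum _ _)]
  split_ifs with hxy
  · exact cfc_congr fun t _ => by by_cases ht : t = x <;> simp [← hxy, ht]
  · rw [← cfc_const_zero ℝ A]
    exact cfc_congr fun t _ => by by_cases ht : t = x <;> simp [hxy, ht]

theorem cfc_eq_sum_smul_spectralProjection (A : Matrix n n 𝕜) (f : ℝ → ℝ) :
    cfc f A = ∑ x ∈ A.finite_real_spectrum.toFinset, f x • spectralProjection A x := by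
  simp only [spectralProjection, ← cfc_smul _ _ _ (continuousOn_real_spectrum _ _)]
  rw [← cfc_sum _ _ _ fun x _ => continuousOn_real_spectrum _ _]
  exact cfc_congr fun t ht => by simp [Finset.sum_apply, Pi.single_apply, ht]

/-- The joint functional calculus `f (L_A, R_Z)` applied to `K`, where `L_A` is left multiplication
by the Hermitian matrix `A` and `R_Z` is right multiplication by the Hermitian matrix `Z`: two
commuting self-adjoint operators for the trace inner product. -/
noncomputable def jointCfc (f : ℝ → ℝ → ℝ) (A : Matrix m m 𝕜) (Z : Matrix n n 𝕜)
    (K : Matrix m n 𝕜) : Matrix m n 𝕜 :=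
  ∑ x ∈ A.finite_real_spectrum.toFinset, ∑ y ∈ Z.finite_real_spectrum.toFinset,
    f x y • (spectralProjection A x * K * spectralProjection Z y)

theorem jointCfc_congr {f g : ℝ → ℝ → ℝ}
    (h : ∀ x ∈ spectrum ℝ A, ∀ y ∈ spectrum ℝ Z, f x y = g x y) (K : Matrix m n 𝕜) :
    jointCfc f A Z K = jointCfc g A Z K :=
  Finset.sum_congr rfl fun x hx => Finset.sum_congr rfl fun y hy => by
    rw [h x (by simpa using hx) y (by simpa using hy)]

theorem jointCfc_const_mul (c : ℝ) (f : ℝ → ℝ → ℝ) (K : Matrix m n 𝕜) :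
    jointCfc (fun x y => c * f x y) A Z K = c • jointCfc f A Z K := by
  simp only [jointCfc, mul_smul, Finset.smul_sum]

theorem jointCfc_add (f g : ℝ → ℝ → ℝ) (K : Matrix m n 𝕜) :
    jointCfc (fun x y => f x y + g x y) A Z K = jointCfc f A Z K + jointCfc g A Z K := by
  simp only [jointCfc, add_smul, Finset.sum_add_distrib]

theorem jointCfc_sub (f : ℝ → ℝ → ℝ) (K W : Matrix m n 𝕜) :
    jointCfc f A Z (K - W) = jointCfc f A Z K - jointCfc f A Z W := by
  simp only [jointCfc, Matrix.mul_sub, Matrix.sub_mul, smul_sub, Finset.sum_sub_distrib]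

theorem jointCfc_mul_eq_cfc_mul_mul_cfc (f g : ℝ → ℝ) (K : Matrix m n 𝕜) :
    jointCfc (fun x y => f x * g y) A Z K = cfc f A * K * cfc g Z := by
  rw [cfc_eq_sum_smul_spectralProjection A f, cfc_eq_sum_smul_spectralProjection Z g,
    Matrix.sum_mul, Matrix.sum_mul]
  refine Finset.sum_congr rfl fun x _ => ?_
  rw [Matrix.mul_sum]
  refine Finset.sum_congr rfl fun y _ => ?_
  rw [Matrix.smul_mul, Matrix.smul_mul, Matrix.mul_smul, smul_smul]

theorem spectralProjection_mul_jointCfc_mul_spectralProjection (f : ℝ → ℝ → ℝ)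
    (K : Matrix m n 𝕜) {x y : ℝ} (hx : x ∈ spectrum ℝ A) (hy : y ∈ spectrum ℝ Z) :
    spectralProjection A x * jointCfc f A Z K * spectralProjection Z y =
      f x y • (spectralProjection A x * K * spectralProjection Z y) := by
  have sandwich : ∀ x' y', spectralProjection A x *
      (spectralProjection A x' * K * spectralProjection Z y') * spectralProjection Z y =
        if x = x' then if y' = y then spectralProjection A x * K * spectralProjection Z y else 0
        else 0 := fun x' y' => by
    calc _ = spectralProjection A x * spectralProjection A x' * K *
          (spectralProjection Z y' * spectralProjection Z y) := by simp only [Matrix.mul_assoc]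
      _ = _ := by
        rw [spectralProjection_mul_spectralProjection, spectralProjection_mul_spectralProjection]
        split_ifs <;> simp [*]
  simp only [jointCfc, Matrix.mul_sum, Matrix.sum_mul, Matrix.mul_smul, Matrix.smul_mul, sandwich,
    smul_ite, smul_zero]
  simp [hx, hy]

theorem jointCfc_jointCfc (f g : ℝ → ℝ → ℝ) (K : Matrix m n 𝕜) :
    jointCfc f A Z (jointCfc g A Z K) = jointCfc (fun x y => f x y * g x y) A Z K :=
  Finset.sum_congr rfl fun x hx => Finset.sum_congr rfl fun y hy => by
    rw [spectralProjection_mul_jointCfc_mul_spectralProjection _ _ (by simpa using hx)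
      (by simpa using hy), smul_smul]

theorem trace_conjTranspose_mul_jointCfc (f : ℝ → ℝ → ℝ) (W K : Matrix m n 𝕜) :
    trace (Wᴴ * jointCfc f A Z K) = trace ((jointCfc f A Z W)ᴴ * K) := by
  simp only [jointCfc, conjTranspose_sum, conjTranspose_smul, conjTranspose_mul, Matrix.mul_sum,
    Matrix.sum_mul, trace_sum, (isHermitian_spectralProjection _ _).eq, star_trivial,
    Matrix.mul_smul, Matrix.smul_mul, trace_smul]
  refine Finset.sum_congr rfl fun x _ => Finset.sum_congr rfl fun y _ => ?_
  rw [← Matrix.mul_assoc, trace_mul_comm]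
  simp only [Matrix.mul_assoc]

theorem re_trace_conjTranspose_mul_jointCfc_eq_sum (f : ℝ → ℝ → ℝ) (K : Matrix m n 𝕜) :
    RCLike.re (trace (Kᴴ * jointCfc f A Z K)) =
      ∑ x ∈ A.finite_real_spectrum.toFinset, ∑ y ∈ Z.finite_real_spectrum.toFinset, f x y *
        RCLike.re (trace (Kᴴ * (spectralProjection A x * K * spectralProjection Z y))) := by
  simp only [jointCfc, Matrix.mul_sum, Matrix.mul_smul, trace_sum, trace_smul, map_sum,
    RCLike.smul_re]

theorem re_trace_conjTranspose_mul_jointCfc_nonneg {f : ℝ → ℝ → ℝ}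
    (hf : ∀ x ∈ spectrum ℝ A, ∀ y ∈ spectrum ℝ Z, 0 ≤ f x y) (K : Matrix m n 𝕜) :
    0 ≤ RCLike.re (trace (Kᴴ * jointCfc f A Z K)) := by
  have hsqrt : jointCfc (fun x y => √(f x y) * √(f x y)) A Z K = jointCfc f A Z K :=
    jointCfc_congr (fun x hx y hy => Real.mul_self_sqrt (hf x hx y hy)) K
  rw [← hsqrt, ← jointCfc_jointCfc, trace_conjTranspose_mul_jointCfc]
  exact (RCLike.nonneg_iff.1 (posSemidef_conjTranspose_mul_self _).trace_nonneg).1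

theorem re_trace_conjTranspose_mul_jointCfc_mono {f g : ℝ → ℝ → ℝ}
    (h : ∀ x ∈ spectrum ℝ A, ∀ y ∈ spectrum ℝ Z, f x y ≤ g x y) (K : Matrix m n 𝕜) :
    RCLike.re (trace (Kᴴ * jointCfc f A Z K)) ≤ RCLike.re (trace (Kᴴ * jointCfc g A Z K)) := by
  have hnn := re_trace_conjTranspose_mul_jointCfc_nonneg (f := fun x y => g x y - f x y)
    (fun x hx y hy => sub_nonneg.2 (h x hx y hy)) K
  simp only [re_trace_conjTranspose_mul_jointCfc_eq_sum, sub_mul, Finset.sum_sub_distrib] at hnn ⊢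
  linarith

theorem isGreatest_re_trace_jointCfc_sq_div (a : ℝ → ℝ → ℝ) {φ : ℝ → ℝ → ℝ}
    (hφ : ∀ x ∈ spectrum ℝ A, ∀ y ∈ spectrum ℝ Z, 0 ≤ φ x y)
    (ha : ∀ x ∈ spectrum ℝ A, ∀ y ∈ spectrum ℝ Z, φ x y = 0 → a x y = 0) (K : Matrix m n 𝕜) :
    IsGreatest
      (Set.range fun W => 2 * RCLike.re (trace (Wᴴ * jointCfc a A Z K)) -
        RCLike.re (trace (Wᴴ * jointCfc φ A Z W)))
      (RCLike.re (trace (Kᴴ * jointCfc (fun x y => a x y ^ 2 / φ x y) A Z K))) := by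
  set M := jointCfc (fun x y => a x y / φ x y) A Z K with hM
  have hφM : jointCfc φ A Z M = jointCfc a A Z K := by
    rw [hM, jointCfc_jointCfc]
    exact jointCfc_congr (fun x hx y hy => mul_div_cancel_of_imp' (ha x hx y hy)) K
  have hMM : trace (Mᴴ * jointCfc a A Z K) =
      trace (Kᴴ * jointCfc (fun x y => a x y ^ 2 / φ x y) A Z K) := by
    rw [hM, ← trace_conjTranspose_mul_jointCfc, jointCfc_jointCfc]
    congr 3 with x y
    ring
  refine ⟨⟨M, ?_⟩, ?_⟩
  · simp only [hφM, hMM]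
    ring
  · rintro _ ⟨W, rfl⟩
    have hsq := re_trace_conjTranspose_mul_jointCfc_nonneg hφ (W - M)
    have hcross : RCLike.re (trace (Mᴴ * jointCfc φ A Z W)) =
        RCLike.re (trace (Wᴴ * jointCfc a A Z K)) := by
      rw [trace_conjTranspose_mul_jointCfc, hφM, ← RCLike.conj_re, starRingEnd_apply,
        ← trace_conjTranspose, conjTranspose_mul, conjTranspose_conjTranspose]
    rw [jointCfc_sub, hφM, conjTranspose_sub, Matrix.sub_mul, Matrix.mul_sub, Matrix.mul_sub] at hsq
    simp only [trace_sub, map_sub, hMM, hcross] at hsq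
    simp only
    linarith

theorem jointCfc_fst (hA : A.IsHermitian) (hZ : Z.IsHermitian) (K : Matrix m n 𝕜) :
    jointCfc (fun x _ => x) A Z K = A * K := by
  have h := jointCfc_mul_eq_cfc_mul_mul_cfc (A := A) (Z := Z) (fun x => x) (fun _ => 1) K
  rw [cfc_id' ℝ A hA.isSelfAdjoint, cfc_const_one ℝ Z hZ.isSelfAdjoint, Matrix.mul_one] at h
  simpa only [mul_one] using h

theorem jointCfc_snd (hA : A.IsHermitian) (hZ : Z.IsHermitian) (K : Matrix m n 𝕜) :
    jointCfc (fun _ y => y) A Z K = K * Z := by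
  have h := jointCfc_mul_eq_cfc_mul_mul_cfc (A := A) (Z := Z) (fun _ => 1) (fun y => y) K
  rw [cfc_const_one ℝ A hA.isSelfAdjoint, cfc_id' ℝ Z hZ.isSelfAdjoint, Matrix.one_mul] at h
  simpa only [one_mul] using h

section Integral

open MeasureTheory

variable {μ : Measure ℝ} {f : ℝ → ℝ → ℝ → ℝ}

theorem integrable_re_trace_conjTranspose_mul_jointCfc
    (hf : ∀ x ∈ spectrum ℝ A, ∀ y ∈ spectrum ℝ Z, Integrable (fun r => f r x y) μ)
    (K : Matrix m n 𝕜) :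
    Integrable (fun r => RCLike.re (trace (Kᴴ * jointCfc (f r) A Z K))) μ := by
  simp only [re_trace_conjTranspose_mul_jointCfc_eq_sum]
  exact integrable_finsetSum _ fun x hx => integrable_finsetSum _ fun y hy =>
    (hf x (by simpa using hx) y (by simpa using hy)).mul_const _

theorem re_trace_conjTranspose_mul_jointCfc_integral
    (hf : ∀ x ∈ spectrum ℝ A, ∀ y ∈ spectrum ℝ Z, Integrable (fun r => f r x y) μ)
    (K : Matrix m n 𝕜) :
    RCLike.re (trace (Kᴴ * jointCfc (fun x y => ∫ r, f r x y ∂μ) A Z K)) =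
      ∫ r, RCLike.re (trace (Kᴴ * jointCfc (f r) A Z K)) ∂μ := by
  have hint : ∀ x ∈ A.finite_real_spectrum.toFinset, ∀ y ∈ Z.finite_real_spectrum.toFinset,
      Integrable (fun r => f r x y * RCLike.re (trace
        (Kᴴ * (spectralProjection A x * K * spectralProjection Z y)))) μ := fun x hx y hy =>
    (hf x (by simpa using hx) y (by simpa using hy)).mul_const _
  simp only [re_trace_conjTranspose_mul_jointCfc_eq_sum, ← integral_mul_const]
  rw [integral_finsetSum _ fun x hx => integrable_finsetSum _ (hint x hx)]
  exact Finset.sum_congr rfl fun x hx => (integral_finsetSum _ (hint x hx)).symm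

end Integral

end JointCfc

section Ando

open scoped MatrixOrder

variable {𝕜 m n : Type*} [RCLike 𝕜]

theorem convex_setOf_posSemidef : Convex ℝ {A : Matrix n n 𝕜 | A.PosSemidef} :=
  fun _ hA _ hB _ _ ha hb _ => (hA.smul ha).add (hB.smul hb)

theorem convex_setOf_forall_posSemidef {ι : Type*} {m : ι → Type*} :
    Convex ℝ {A : ∀ j, Matrix (m j) (m j) 𝕜 | ∀ j, (A j).PosSemidef} :=
  fun _ hA _ hB _ _ ha hb hab j => convex_setOf_posSemidef (hA j) (hB j) ha hb hab

theorem convexOn_re_trace [Fintype n] {s : Set (Matrix n n 𝕜)} (hs : Convex ℝ s) :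
    ConvexOn ℝ s fun Z => RCLike.re (trace Z) :=
  ⟨hs, fun _ _ _ _ _ _ _ _ _ => le_of_eq (by
    simp only [trace_add, trace_smul, map_add, RCLike.smul_re, smul_eq_mul])⟩

theorem convex_setOf_posDef : Convex ℝ {A : Matrix n n 𝕜 | A.PosDef} :=
  convex_iff_forall_pos.2 fun _ hA _ hB _ _ ha hb _ => (hA.smul ha).add (hB.smul hb)

variable [Fintype m] [DecidableEq m] [Fintype n] [DecidableEq n]

theorem nonneg_of_mem_spectrum {A : Matrix n n 𝕜} (hA : A.PosSemidef) {x : ℝ}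
    (hx : x ∈ spectrum ℝ A) : 0 ≤ x :=
  spectrum_nonneg_of_nonneg hA.nonneg hx

theorem pos_of_mem_spectrum {A : Matrix n n 𝕜} (hA : A.PosDef) {x : ℝ}
    (hx : x ∈ spectrum ℝ A) : 0 < x :=
  hA.isStrictlyPositive.spectrum_pos hx

theorem posSemidef_rpow {X : Matrix n n 𝕜} (hX : X.PosSemidef) (p : ℝ) :
    (cfc (fun x : ℝ => x ^ p) X).PosSemidef :=
  nonneg_iff_posSemidef.1 (cfc_nonneg fun _ hx => Real.rpow_nonneg (nonneg_of_mem_spectrum hX hx) p)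

theorem convexOn_re_trace_jointCfc_sq_div {α β : ℝ} (hα : 0 ≤ α) (hβ : 0 ≤ β) (hαβ : 0 < α + β)
    (K : Matrix m n 𝕜) :
    ConvexOn ℝ ({A : Matrix m m 𝕜 | A.PosSemidef} ×ˢ {Z : Matrix n n 𝕜 | Z.PosDef}) fun P =>
      RCLike.re (trace (Kᴴ * jointCfc (fun x y => x ^ 2 / (α * x + β * y)) P.1 P.2 K)) := by
  refine convexOn_of_isLUB (convex_setOf_posSemidef.prod convex_setOf_posDef)
    (l := fun (W : Matrix m n 𝕜) P => 2 * RCLike.re (trace (Wᴴ * (P.1 * K))) -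
      RCLike.re (trace (Wᴴ * (α • (P.1 * W) + β • (W * P.2))))) (fun W => ?_) ?_
  · refine ⟨convex_setOf_posSemidef.prod convex_setOf_posDef, fun P _ Q _ a b _ _ _ => le_of_eq ?_⟩
    simp only [Prod.fst_add, Prod.snd_add, Prod.smul_fst, Prod.smul_snd, Matrix.add_mul,
      Matrix.mul_add, Matrix.smul_mul, Matrix.mul_smul, trace_add, trace_smul, map_add,
      RCLike.smul_re, smul_eq_mul]
    ring
  · rintro ⟨A, Z⟩ ⟨hA : A.PosSemidef, hZ : Z.PosDef⟩
    have hx : ∀ x ∈ spectrum ℝ A, 0 ≤ x := fun x => nonneg_of_mem_spectrum hA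
    have hy : ∀ y ∈ spectrum ℝ Z, 0 < y := fun y => pos_of_mem_spectrum hZ
    have hφ : ∀ W : Matrix m n 𝕜,
        jointCfc (fun x y => α * x + β * y) A Z W = α • (A * W) + β • (W * Z) := fun W => by
      rw [jointCfc_add, jointCfc_const_mul, jointCfc_const_mul, jointCfc_fst hA.1 hZ.1,
        jointCfc_snd hA.1 hZ.1]
    have h := isGreatest_re_trace_jointCfc_sq_div (A := A) (Z := Z) (fun x _ => x)
      (φ := fun x y => α * x + β * y)
      (fun x hxA y hyZ => add_nonneg (mul_nonneg hα (hx x hxA)) (mul_nonneg hβ (hy y hyZ).le))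
      (fun x hxA y hyZ h0 => ?_) K
    · simpa only [hφ, jointCfc_fst hA.1 hZ.1] using h.isLUB
    · have := hx x hxA
      have := hy y hyZ
      obtain ⟨hαx, hβy⟩ := (add_eq_zero_iff_of_nonneg (by positivity) (by positivity)).1 h0
      have hβ0 : β = 0 := (mul_eq_zero.1 hβy).resolve_right (by positivity)
      exact (mul_eq_zero.1 hαx).resolve_left (by linarith)

theorem re_trace_rpow_mul_rpow_eq_re_trace_jointCfc {A : Matrix m m 𝕜} (hA : A.PosSemidef)
    {Z : Matrix n n 𝕜} (hZ : Z.PosDef) {p : ℝ} {f : ℝ → ℝ → ℝ}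
    (hf : ∀ x y, 0 ≤ x → 0 < y → x ^ p * y ^ (1 - p) = f x y) (K : Matrix m n 𝕜) :
    RCLike.re (trace (Kᴴ * cfc (fun x : ℝ => x ^ p) A * K * cfc (fun x : ℝ => x ^ (1 - p)) Z)) =
      RCLike.re (trace (Kᴴ * jointCfc f A Z K)) := by
  rw [← jointCfc_congr (fun x hx y hy => hf x y (nonneg_of_mem_spectrum hA hx)
    (pos_of_mem_spectrum hZ hy)), jointCfc_mul_eq_cfc_mul_mul_cfc]
  simp only [Matrix.mul_assoc]

open MeasureTheory in
theorem convexOn_re_trace_rpow_mul_rpow {p : ℝ} (hp : p ∈ Set.Icc 1 2) (K : Matrix m n 𝕜) :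
    ConvexOn ℝ ({A : Matrix m m 𝕜 | A.PosSemidef} ×ˢ {Z : Matrix n n 𝕜 | Z.PosDef}) fun P =>
      RCLike.re (trace (Kᴴ * cfc (fun x : ℝ => x ^ p) P.1 * K *
        cfc (fun x : ℝ => x ^ (1 - p)) P.2)) := by
  rcases hp.1.eq_or_lt with rfl | hp1
  · refine (convexOn_re_trace_jointCfc_sq_div one_pos.le le_rfl (by norm_num) K).congr
      fun P hP => (re_trace_rpow_mul_rpow_eq_re_trace_jointCfc hP.1 hP.2 (fun x y _ _ => ?_) K).symm
    rcases eq_or_ne x 0 with rfl | hx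
    · simp
    · simp [sq, hx]
  rcases hp.2.eq_or_lt with rfl | hp2
  · refine (convexOn_re_trace_jointCfc_sq_div le_rfl one_pos.le (by norm_num) K).congr
      fun P hP => (re_trace_rpow_mul_rpow_eq_re_trace_jointCfc hP.1 hP.2 (fun x y _ _ => ?_) K).symm
    norm_num [Real.rpow_neg_one, div_eq_mul_inv]
  obtain ⟨μ, hμ, hker⟩ := exists_measure_rpow_mul_rpow_eq_integral ⟨hp1, hp2⟩
  have hint : ∀ P ∈ {A : Matrix m m 𝕜 | A.PosSemidef} ×ˢ {Z : Matrix n n 𝕜 | Z.PosDef},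
      ∀ x ∈ spectrum ℝ P.1, ∀ y ∈ spectrum ℝ P.2,
        Integrable (fun r => x ^ 2 / (x + r * y)) μ := fun P hP x hx y hy =>
    (hker x y (nonneg_of_mem_spectrum hP.1 hx) (pos_of_mem_spectrum hP.2 hy)).1
  have hconv : ConvexOn ℝ ({A : Matrix m m 𝕜 | A.PosSemidef} ×ˢ {Z : Matrix n n 𝕜 | Z.PosDef})
      fun P => ∫ r, RCLike.re (trace
        (Kᴴ * jointCfc (fun x y => x ^ 2 / (x + r * y)) P.1 P.2 K)) ∂μ := by
    refine integral_convexOn_of_integrand_ae (convex_setOf_posSemidef.prod convex_setOf_posDef)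
      (hμ.mono fun r hr => ?_) fun P hP =>
        integrable_re_trace_conjTranspose_mul_jointCfc (hint P hP) K
    have h := convexOn_re_trace_jointCfc_sq_div one_pos.le hr.le (by positivity) K
    simpa only [one_mul] using h
  refine hconv.congr fun P hP => ?_
  rw [re_trace_rpow_mul_rpow_eq_re_trace_jointCfc hP.1 hP.2 (fun x y hx hy => (hker x y hx hy).2),
    re_trace_conjTranspose_mul_jointCfc_integral (hint P hP)]

theorem convexOn_re_trace_mul_rpow {p : ℝ} (hp : p ∈ Set.Icc 1 2) {C : Matrix n n 𝕜}
    (hC : C.PosSemidef) :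
    ConvexOn ℝ {Z : Matrix n n 𝕜 | Z.PosDef} fun Z =>
      RCLike.re (trace (C * cfc (fun x : ℝ => x ^ (1 - p)) Z)) := by
  obtain ⟨S, rfl⟩ := CStarAlgebra.nonneg_iff_eq_star_mul_self.1 hC.nonneg
  have h := (convexOn_re_trace_rpow_mul_rpow hp S).comp_affineMap
    ((AffineMap.const ℝ (Matrix n n 𝕜) (1 : Matrix n n 𝕜)).prod (AffineMap.id ℝ _))
  refine (h.subset (fun Z hZ => ⟨PosSemidef.one, hZ⟩) convex_setOf_posDef).congr fun Z _ => ?_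
  simp [star_eq_conjTranspose]

theorem re_trace_cfc_mono {X : Matrix n n 𝕜} {f g : ℝ → ℝ} (h : ∀ x ∈ spectrum ℝ X, f x ≤ g x) :
    RCLike.re (trace (cfc f X)) ≤ RCLike.re (trace (cfc g X)) := by
  have hfg : (cfc g X - cfc f X).PosSemidef := Matrix.le_iff.1 (cfc_mono h
    (continuousOn_real_spectrum _ _) (continuousOn_real_spectrum _ _))
  have h0 := (RCLike.nonneg_iff.1 hfg.trace_nonneg).1
  rwa [trace_sub, map_sub, sub_nonneg] at h0

theorem re_trace_rpow_inv_le {p : ℝ} (hp : 1 ≤ p) {X Z : Matrix n n 𝕜} (hX : X.PosSemidef)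
    (hZ : Z.PosDef) :
    RCLike.re (trace (cfc (fun x : ℝ => x ^ p⁻¹) X)) ≤
      p⁻¹ * RCLike.re (trace (X * cfc (fun x : ℝ => x ^ (1 - p)) Z)) +
        (1 - p⁻¹) * RCLike.re (trace Z) := by
  have h := re_trace_conjTranspose_mul_jointCfc_mono (A := X) (Z := Z) (fun x hx z hz =>
    rpow_inv_le_mul_rpow_add hp (nonneg_of_mem_spectrum hX hx) (pos_of_mem_spectrum hZ hz)) 1
  have hleft : jointCfc (fun x _ => x ^ p⁻¹) X Z 1 = cfc (fun x : ℝ => x ^ p⁻¹) X := by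
    have := jointCfc_mul_eq_cfc_mul_mul_cfc (A := X) (Z := Z) (fun x => x ^ p⁻¹) (fun _ => 1) 1
    rw [cfc_const_one ℝ Z hZ.1.isSelfAdjoint, Matrix.mul_one, Matrix.mul_one] at this
    simpa only [mul_one] using this
  rw [hleft, jointCfc_add, jointCfc_const_mul, jointCfc_const_mul, jointCfc_snd hX.1 hZ.1,
    jointCfc_mul_eq_cfc_mul_mul_cfc (fun x => x), cfc_id' ℝ X hX.1.isSelfAdjoint] at h
  simpa only [conjTranspose_one, Matrix.one_mul, Matrix.mul_one, trace_add, trace_smul, map_add,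
    RCLike.smul_re] using h

theorem exists_posDef_re_trace_le_re_trace_rpow_inv_add {p : ℝ} (hp : 1 ≤ p)
    {X : Matrix n n 𝕜} (hX : X.PosSemidef) {ε : ℝ} (hε : 0 < ε) :
    ∃ Z : Matrix n n 𝕜, Z.PosDef ∧
      p⁻¹ * RCLike.re (trace (X * cfc (fun x : ℝ => x ^ (1 - p)) Z)) +
        (1 - p⁻¹) * RCLike.re (trace Z) ≤
          RCLike.re (trace (cfc (fun x : ℝ => x ^ p⁻¹) X)) + ε * Fintype.card n := by
  -- Equality in Young's inequality holds at `Z = X^{1/p}`; the shift by `ε` makes it definite.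
  have hXs := hX.1.isSelfAdjoint
  have hroot : cfc (fun x : ℝ => x ^ p⁻¹ + ε) X = cfc (fun x : ℝ => x ^ p⁻¹) X + ε • 1 := by
    rw [cfc_add_const ε (fun x : ℝ => x ^ p⁻¹) X (continuousOn_real_spectrum _ _) hXs,
      Algebra.algebraMap_eq_smul_one]
  have hle : RCLike.re (trace (X * cfc (fun x : ℝ => x ^ (1 - p)) (cfc (fun x => x ^ p⁻¹ + ε) X))) ≤
      RCLike.re (trace (cfc (fun x : ℝ => x ^ p⁻¹ + ε) X)) := by
    have hmul : X * cfc (fun x : ℝ => x ^ (1 - p)) (cfc (fun x => x ^ p⁻¹ + ε) X) =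
        cfc (fun x : ℝ => x * (x ^ p⁻¹ + ε) ^ (1 - p)) X := by
      rw [cfc_mul (fun x => x) _ X (continuousOn_real_spectrum _ _)
        (continuousOn_real_spectrum _ _), cfc_id' ℝ X hXs,
        ← cfc_comp' (fun x : ℝ => x ^ (1 - p)) _ X
          ((X.finite_real_spectrum.image _).continuousOn _) (continuousOn_real_spectrum _ _) hXs]
    rw [hmul]
    refine re_trace_cfc_mono fun x hx => ?_
    have hx0 := nonneg_of_mem_spectrum hX hx
    exact mul_rpow_one_sub_le hp hx0 (by positivity) (by linarith)
  refine ⟨cfc (fun x : ℝ => x ^ p⁻¹ + ε) X, ?_, ?_⟩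
  · rw [hroot]
    exact PosDef.posSemidef_add (posSemidef_rpow hX p⁻¹) (PosDef.one.smul hε)
  · have htr : RCLike.re (trace (cfc (fun x : ℝ => x ^ p⁻¹ + ε) X)) =
        RCLike.re (trace (cfc (fun x : ℝ => x ^ p⁻¹) X)) + ε * Fintype.card n := by
      rw [hroot, trace_add, trace_smul, trace_one, map_add, RCLike.smul_re, RCLike.natCast_re]
    have hp0 : 0 ≤ p⁻¹ := by positivity
    linarith [mul_le_mul_of_nonneg_left hle hp0]

theorem isGLB_re_trace_rpow_inv {p : ℝ} (hp : 1 ≤ p) {X : Matrix n n 𝕜} (hX : X.PosSemidef) :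
    IsGLB ((fun Z => p⁻¹ * RCLike.re (trace (X * cfc (fun x : ℝ => x ^ (1 - p)) Z)) +
      (1 - p⁻¹) * RCLike.re (trace Z)) '' {Z | Z.PosDef})
      (RCLike.re (trace (cfc (fun x : ℝ => x ^ p⁻¹) X))) := by
  refine ⟨?_, fun b hb => ?_⟩
  · rintro _ ⟨Z, hZ, rfl⟩
    exact re_trace_rpow_inv_le hp hX hZ
  · have hlim : Filter.Tendsto (fun ε : ℝ => RCLike.re (trace (cfc (fun x : ℝ => x ^ p⁻¹) X)) +
        ε * Fintype.card n) (nhdsWithin 0 (Set.Ioi 0))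
        (nhds (RCLike.re (trace (cfc (fun x : ℝ => x ^ p⁻¹) X)))) :=
      (Continuous.tendsto' (by fun_prop) _ _ (by simp)).mono_left nhdsWithin_le_nhds
    refine ge_of_tendsto hlim (eventually_mem_nhdsWithin.mono fun ε hε => ?_)
    obtain ⟨Z, hZ, hle⟩ := exists_posDef_re_trace_le_re_trace_rpow_inv_add hp hX hε
    exact (hb ⟨Z, hZ, rfl⟩).trans hle

end Ando

section Multivariate

variable {𝕜 ι n : Type*} {m : ι → Type*} [RCLike 𝕜] [Fintype ι] [Fintype n] [DecidableEq n]
  [∀ j, Fintype (m j)] [∀ j, DecidableEq (m j)]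

theorem convexOn_re_trace_sum_mul_rpow {p : ℝ} (hp : p ∈ Set.Icc 1 2) {C : Matrix n n 𝕜}
    (hC : C.PosSemidef) (H : ∀ j, Matrix (m j) n 𝕜) :
    ConvexOn ℝ ({A : ∀ j, Matrix (m j) (m j) 𝕜 | ∀ j, (A j).PosSemidef} ×ˢ
      {Z : Matrix n n 𝕜 | Z.PosDef}) fun P => RCLike.re (trace
        ((C + ∑ j, (H j)ᴴ * cfc (fun x : ℝ => x ^ p) (P.1 j) * H j) *
          cfc (fun x : ℝ => x ^ (1 - p)) P.2)) := by
  have hs : Convex ℝ ({A : ∀ j, Matrix (m j) (m j) 𝕜 | ∀ j, (A j).PosSemidef} ×ˢ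
      {Z : Matrix n n 𝕜 | Z.PosDef}) :=
    convex_setOf_forall_posSemidef.prod convex_setOf_posDef
  have hconst := ((convexOn_re_trace_mul_rpow hp hC).comp_linearMap
    (LinearMap.snd ℝ (∀ j, Matrix (m j) (m j) 𝕜) (Matrix n n 𝕜))).subset (fun _ hP => hP.2) hs
  have hterm := fun j => ((convexOn_re_trace_rpow_mul_rpow hp (H j)).comp_linearMap
    ((LinearMap.proj (φ := fun j => Matrix (m j) (m j) 𝕜) j).prodMap
      (LinearMap.id (M := Matrix n n 𝕜)))).subset
      (fun _ hP => ⟨hP.1 j, hP.2⟩) hs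
  refine (hconst.add (convexOn_finset_sum hs Finset.univ fun j _ => hterm j)).congr fun P _ => ?_
  simp [Matrix.add_mul, Matrix.sum_mul, trace_sum]

theorem convexOn_re_trace_rpow_inv {p : ℝ} (hp : p ∈ Set.Icc 1 2) {C : Matrix n n 𝕜}
    (hC : C.PosSemidef) (H : ∀ j, Matrix (m j) n 𝕜) :
    ConvexOn ℝ {A : ∀ j, Matrix (m j) (m j) 𝕜 | ∀ j, (A j).PosSemidef} fun A =>
      RCLike.re (trace (cfc (fun x : ℝ => x ^ p⁻¹)
        (C + ∑ j, (H j)ᴴ * cfc (fun x : ℝ => x ^ p) (A j) * H j))) := by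
  have hp0 : 0 ≤ p⁻¹ := inv_nonneg.2 (zero_le_one.trans hp.1)
  have hp1 : 0 ≤ 1 - p⁻¹ := sub_nonneg.2 (inv_le_one_of_one_le₀ hp.1)
  have hmul := convexOn_re_trace_sum_mul_rpow hp hC H
  have htr := ((convexOn_re_trace convex_setOf_posDef).comp_linearMap
    (LinearMap.snd ℝ (∀ j, Matrix (m j) (m j) 𝕜) (Matrix n n 𝕜))).subset (fun _ hP => hP.2) hmul.1
  have hjoint : ConvexOn ℝ ({A : ∀ j, Matrix (m j) (m j) 𝕜 | ∀ j, (A j).PosSemidef} ×ˢ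
      {Z : Matrix n n 𝕜 | Z.PosDef}) fun P => p⁻¹ * RCLike.re (trace
        ((C + ∑ j, (H j)ᴴ * cfc (fun x : ℝ => x ^ p) (P.1 j) * H j) *
          cfc (fun x : ℝ => x ^ (1 - p)) P.2)) + (1 - p⁻¹) * RCLike.re (trace P.2) :=
    (hmul.smul hp0).add (htr.smul hp1)
  refine convexOn_of_isGLB_image convex_setOf_forall_posSemidef hjoint fun A hA => ?_
  have hX := hC.add (posSemidef_sum Finset.univ fun j _ =>
    (posSemidef_rpow (hA j) p).conjTranspose_mul_mul_same (H j))
  exact (isGLB_re_trace_rpow_inv hp.1 hX :)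

end Multivariate

section Main

variable {m n k : ℕ} {q : ℝ}

theorem mlogq_eq_smul_sub {A : Matrix (Fin m) (Fin m) ℂ} (hA : A.IsHermitian) :
    mlogq q A = (q - 1)⁻¹ • (cfc (fun x : ℝ => x ^ (q - 1)) A - 1) := by
  have h : logq q = fun x => (q - 1)⁻¹ * (x ^ (q - 1) - 1) := by
    ext x
    rw [logq, div_eq_inv_mul]
  rw [mlogq, h, cfc_const_mul _ _ _ (continuousOn_real_spectrum _ _),
    cfc_sub _ _ _ (continuousOn_real_spectrum _ _) (continuousOn_real_spectrum _ _),
    cfc_const_one ℝ A hA.isSelfAdjoint]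

theorem mexpq_eq_rpow_inv (hq : q ≠ 1) {M : Matrix (Fin n) (Fin n) ℂ} (hM : M.IsHermitian) :
    mexpq q M = cfc (fun x : ℝ => x ^ (q - 1)⁻¹) (1 + (q - 1) • M) := by
  have hMs := hM.isSelfAdjoint
  have haff : 1 + (q - 1) • M = cfc (fun x => 1 + (q - 1) * x) M := by
    rw [cfc_const_add 1 (fun x => (q - 1) * x) M (continuousOn_real_spectrum _ _) hMs,
      cfc_const_mul_id _ _ hMs, map_one]
  rw [haff, ← cfc_comp' (fun x : ℝ => x ^ (q - 1)⁻¹) _ M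
    ((M.finite_real_spectrum.image _).continuousOn _) (continuousOn_real_spectrum _ _) hMs, mexpq]
  congr 1 with x
  rw [expq, if_neg hq, one_div]

theorem phim_eq_re_trace_rpow_inv (hq : q ≠ 1) (H : Fin k → Matrix (Fin m) (Fin n) ℂ)
    {L : Matrix (Fin n) (Fin n) ℂ} (hL : L.IsHermitian) {A : Fin k → Matrix (Fin m) (Fin m) ℂ}
    (hA : ∀ j, (A j).IsHermitian) :
    phim q H L A = RCLike.re (trace (cfc (fun x : ℝ => x ^ (q - 1)⁻¹)
      (1 - ∑ j, (H j)ᴴ * H j + (q - 1) • L +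
        ∑ j, (H j)ᴴ * cfc (fun x : ℝ => x ^ (q - 1)) (A j) * H j))) := by
  have hq0 : q - 1 ≠ 0 := sub_ne_zero.2 hq
  have hM : (L + ∑ j, (H j)ᴴ * mlogq q (A j) * H j).IsHermitian :=
    hL.add (isSelfAdjoint_sum _ fun j _ =>
      isHermitian_conjTranspose_mul_mul _ (cfc_predicate (logq q) (A j)))
  have harg : 1 + (q - 1) • (L + ∑ j, (H j)ᴴ * mlogq q (A j) * H j) =
      1 - ∑ j, (H j)ᴴ * H j + (q - 1) • L +
        ∑ j, (H j)ᴴ * cfc (fun x : ℝ => x ^ (q - 1)) (A j) * H j := by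
    simp only [mlogq_eq_smul_sub (hA _), smul_add, Finset.smul_sum, Matrix.mul_smul,
      Matrix.smul_mul, smul_inv_smul₀ hq0, Matrix.mul_sub, Matrix.sub_mul, Matrix.mul_one,
      Finset.sum_sub_distrib]
    abel
  rw [phim, trRe, mexpq_eq_rpow_inv hq hM, harg, RCLike.re_eq_complex_re]

theorem stmt11_general (hq : q ∈ Set.Icc (2 : ℝ) 3) (H : Fin k → Matrix (Fin m) (Fin n) ℂ)
    {L : Matrix (Fin n) (Fin n) ℂ} (hHL : (1 - ∑ j, (H j)ᴴ * H j + (q - 1) • L).PosSemidef) :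
    ConvexOn ℝ {A : Fin k → Matrix (Fin m) (Fin m) ℂ | ∀ j, (A j).PosSemidef} (phim q H L) := by
  have hp : q - 1 ∈ Set.Icc (1 : ℝ) 2 := ⟨by linarith [hq.1], by linarith [hq.2]⟩
  have hq0 : q - 1 ≠ 0 := by linarith [hp.1]
  have hL : L.IsHermitian := by
    have hHH : (∑ j, (H j)ᴴ * H j).IsHermitian :=
      isSelfAdjoint_sum _ fun j _ => isHermitian_conjTranspose_mul_self (H j)
    have h := hHL.1.sub (isHermitian_one.sub hHH)
    rw [add_sub_cancel_left] at h
    have hinv : IsSelfAdjoint ((q - 1)⁻¹ • (q - 1) • L) := IsSelfAdjoint.smul (.all _) h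
    rwa [inv_smul_smul₀ hq0] at hinv
  exact (convexOn_re_trace_rpow_inv hp hHL H).congr fun A hA =>
    (phim_eq_re_trace_rpow_inv (by linarith [hq.1]) H hL fun j => (hA j).1).symm

end Main

/-- Joint convexity of φ for q ∈ [2,3], Σⱼ Hⱼ*Hⱼ ≤ I and L positive semidefinite. -/
theorem stmt11 {m n k : ℕ} (q : ℝ) (hq : q ∈ Set.Icc (2 : ℝ) 3)
    (H : Fin k → Matrix (Fin m) (Fin n) ℂ)
    (hH : (1 - ∑ j, (H j)ᴴ * H j).PosSemidef)
    (L : Matrix (Fin n) (Fin n) ℂ) (hL : L.PosSemidef)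
    (A B : Fin k → Matrix (Fin m) (Fin m) ℂ)
    (hA : ∀ j, (A j).PosDef) (hB : ∀ j, (B j).PosDef)
    (t : ℝ) (ht : t ∈ Set.Icc (0 : ℝ) 1) :
    phim q H L (fun j => t • A j + (1 - t) • B j)
      ≤ t * phim q H L A + (1 - t) * phim q H L B := by
  exact (stmt11_general hq H (hH.add (hL.smul (by linarith [hq.1])))).2
    (fun j => (hA j).posSemidef) (fun j => (hB j).posSemidef) ht.1 (sub_nonneg.2 ht.2)
    (add_sub_cancel _ _)
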